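/- In every Hubbard tree (T,f): the critical value c₁ = f(c₀) is an endpoint of T; the critical point c₀ has at most two arms (T \ {c₀} has at most two connected components); every branch point of T is periodic or preperiodic under f; no iterated image of a branch point equals c₀; the number of arms is constant along the periodic part of the orbit of any branch point; and every arc in T that does not contain c₀ in its interior is mapped by f homeomorphically onto its image. -/

import Mathlib

/- Common definitions for formalizing "Admissibility of kneading sequences and
structure of Hubbard trees for quadratic polynomials" by Bruin–Schleicher. -/

namespace HubbardTrees

/-- The symbols `0`, `1`, `*` used for itineraries and kneading sequences. -/
inductive Sym : Type
  | zero : Sym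
  | one : Sym
  | star : Sym
deriving DecidableEq

/-- `A` is an arc in `X` joining `x` and `y` (a point if `x = y`, otherwise a
homeomorphic image of `[0,1]` with endpoints `x` and `y`). -/
def IsArcBetween {X : Type*} [TopologicalSpace X] (A : Set X) (x y : X) : Prop :=
  (x = y ∧ A = {x}) ∨
  (x ≠ y ∧ ∃ γ : Path x y, Topology.IsEmbedding ⇑γ ∧ Set.range ⇑γ = A)

/-- The global arms at `x`: the connected components of `X \ {x}`. -/
def arms {X : Type*} [TopologicalSpace X] (x : X) : Set (Set X) :=
  {C | ∃ y, y ≠ x ∧ C = connectedComponentIn {x}ᶜ y}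

/-- The global arm at `x` containing `y` (for `y ≠ x`): the component of `X \ {x}`
containing `y`.  Local arms at `x` being germs of global arms, we represent the local
arm at `x` pointing towards `y` by this set. -/
def armTo {X : Type*} [TopologicalSpace X] (x y : X) : Set X :=
  connectedComponentIn {x}ᶜ y

/-- `x` is an endpoint: it has exactly one arm. -/
def IsEndpoint {X : Type*} [TopologicalSpace X] (x : X) : Prop :=
  (arms x).ncard = 1

/-- `x` is a branch point: it has at least three arms. -/
def IsBranchPt {X : Type*} [TopologicalSpace X] (x : X) : Prop :=
  3 ≤ (arms x).ncard

/-- `f` maps the set `A` homeomorphically onto its image. -/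
def MapsHomeoOn {X : Type*} [TopologicalSpace X] (f : X → X) (A : Set X) : Prop :=
  Topology.IsEmbedding (A.restrict f)

/-- `f` is a local homeomorphism onto its image at `x`. -/
def IsLocalHomeoAt {X : Type*} [TopologicalSpace X] (f : X → X) (x : X) : Prop :=
  ∃ U : Set X, IsOpen U ∧ x ∈ U ∧ Topology.IsEmbedding (U.restrict f)

/-- `g` sends the local arm at `x` represented by the global arm `C` to the local
arm at `g x` represented by `C'` (germ condition: some initial piece of `C` at `x`
is mapped into `C'`). -/
def MapsLocalArm {X : Type*} [TopologicalSpace X] (g : X → X) (x : X) (C C' : Set X) : Prop :=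
  C ∈ arms x ∧ C' ∈ arms (g x) ∧ ∃ U ∈ nhds x, g '' (C ∩ U) ⊆ C'

/-- `z` is periodic under `f` with exact period `n`. -/
def ExactPeriod {Y : Type*} (f : Y → Y) (z : Y) (n : ℕ) : Prop :=
  1 ≤ n ∧ f^[n] z = z ∧ ∀ k, 1 ≤ k → k < n → f^[k] z ≠ z

/-- The first return map `f^[n]` of the fixed point `z` of `f^[n]` permutes all the
local arms at `z` transitively in a single cycle. -/
def ArmsTransitive {X : Type*} [TopologicalSpace X] (f : X → X) (n : ℕ) (z : X) : Prop :=
  ∀ C ∈ arms z, ∀ C' ∈ arms z, ∃ j : ℕ, MapsLocalArm (f^[n * j]) z C C'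

/-- An (abstract) Hubbard tree: a finite topological tree `X` together with a
continuous surjection `f` and a critical point `c0`, subject to the axioms of
Bruin–Schleicher. -/
structure HubbardTree (X : Type*) [TopologicalSpace X] : Type _ where
  /-- the dynamics -/
  f : X → X
  /-- the critical point -/
  c0 : X
  compact : CompactSpace X
  t2 : T2Space X
  conn : ConnectedSpace X
  /-- the unique arc `[x,y]` joining two points -/
  arc : X → X → Set X
  arc_isArc : ∀ x y : X, IsArcBetween (arc x y) x y
  arc_unique : ∀ (x y : X) (A : Set X), IsArcBetween A x y → A = arc x y
  -- finiteness of the tree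
  arms_finite : ∀ x : X, (arms x).Finite
  branch_finite : Set.Finite {x : X | IsBranchPt x}
  endpoint_finite : Set.Finite {x : X | IsEndpoint x}
  cont : Continuous f
  surj : Function.Surjective f
  /-- every point has at most two inverse images -/
  two_preimages : ∀ y : X, ∃ a b : X, f ⁻¹' {y} ⊆ {a, b}
  /-- local homeomorphism onto its image away from the critical point -/
  local_homeo : ∀ x : X, x ≠ c0 → IsLocalHomeoAt f x
  /-- all endpoints lie on the critical orbit -/
  endpoints_on_orbit : ∀ x : X, IsEndpoint x → ∃ k : ℕ, f^[k] c0 = x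
  /-- the critical point is periodic or preperiodic -/
  crit_preperiodic : ∃ k n : ℕ, 1 ≤ n ∧ f^[k + n] c0 = f^[k] c0
  /-- the critical point is not fixed -/
  crit_not_fixed : f c0 ≠ c0
  /-- expansivity -/
  expansive : ∀ x y : X, x ≠ y →
    (IsBranchPt x ∨ ∃ k : ℕ, f^[k] c0 = x) →
    (IsBranchPt y ∨ ∃ k : ℕ, f^[k] c0 = y) →
    ∃ n : ℕ, c0 ∈ f^[n] '' (arc x y)

namespace HubbardTree

variable {X : Type*} [TopologicalSpace X] (H : HubbardTree X)

/-- The critical value `c₁ = f(c₀)`. -/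
def c1 : X := H.f H.c0

/-- The component `T₁` of `T \ {c₀}` containing the critical value. -/
def T1 : Set X := connectedComponentIn {H.c0}ᶜ H.c1

open Classical in
/-- The symbol (`0`, `1` or `*`) attached to a point of the tree. -/
noncomputable def symOf (x : X) : Sym :=
  if x = H.c0 then Sym.star else if x ∈ H.T1 then Sym.one else Sym.zero

/-- The itinerary of `x`: a sequence of symbols, 1-indexed (the value at index `0`
is irrelevant); entry `k ≥ 1` is the symbol of `f^[k-1] x`. -/
noncomputable def itin (x : X) : ℕ → Sym :=
  fun k => H.symOf (H.f^[k - 1] x)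

/-- The kneading sequence: the itinerary of the critical value (1-indexed). -/
noncomputable def kneading : ℕ → Sym := H.itin H.c1

/-- `z` is the characteristic point of its periodic orbit: `c₁` lies in one
component of `X \ {z}` while `c₀` and all other points of the orbit lie in a
different component. -/
def IsCharacteristic (z : X) : Prop :=
  ∃ Cv Cz : Set X, Cv ∈ arms z ∧ Cz ∈ arms z ∧ Cv ≠ Cz ∧
    H.c1 ∈ Cv ∧ H.c0 ∈ Cz ∧ ∀ k : ℕ, H.f^[k] z ≠ z → H.f^[k] z ∈ Cz

/-- The first return map fixes the local arm at `z` pointing to the critical point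
and permutes all other local arms transitively in a single cycle. -/
def OtherArmsTransitive (n : ℕ) (z : X) : Prop :=
  ∀ C ∈ arms z, C ≠ armTo z H.c0 → ∀ C' ∈ arms z, C' ≠ armTo z H.c0 →
    ∃ j : ℕ, MapsLocalArm (H.f^[n * j]) z C C'

/-- `z` is the characteristic point of an evil periodic orbit of branch points of
exact period `n`. -/
def IsEvilOrbit (z : X) (n : ℕ) : Prop :=
  ExactPeriod H.f z n ∧ (∀ k : ℕ, IsBranchPt (H.f^[k] z)) ∧
    H.IsCharacteristic z ∧ ¬ ArmsTransitive H.f n z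

/-- `x` is precritical with `Step(x) = k`: `k ≥ 1` is minimal with `f^[k] x = c₁`. -/
def Step (x : X) (k : ℕ) : Prop :=
  1 ≤ k ∧ H.f^[k] x = H.c1 ∧ ∀ j, 1 ≤ j → j < k → H.f^[j] x ≠ H.c1

/-- `x` is the closest precritical point `ζ_k`. -/
def IsClosestPrecritical (x : X) (k : ℕ) : Prop :=
  H.Step x k ∧ ∀ j, 1 ≤ j → j < k → H.c1 ∉ H.f^[j] '' (H.arc H.c1 x)

/-- `x` is the earliest precritical point on the set `A`, with `Step(x) = k`:
it is a precritical point on `A` of minimal Step. -/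
def IsEarliestPrecriticalOn (A : Set X) (x : X) (k : ℕ) : Prop :=
  x ∈ A ∧ H.Step x k ∧ ∀ y ∈ A, ∀ j : ℕ, H.Step y j → k ≤ j

/-- Marked points: branch points and points of the critical orbit. -/
def MarkedPt (x : X) : Prop :=
  IsBranchPt x ∨ ∃ k : ℕ, H.f^[k] H.c0 = x

/-- Two marked points are joined by an edge if the arc between them contains no
further marked point. -/
def IsEdge (x y : X) : Prop :=
  H.MarkedPt x ∧ H.MarkedPt y ∧ x ≠ y ∧
    ∀ w ∈ H.arc x y, H.MarkedPt w → w = x ∨ w = y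

/-- Equivalence of Hubbard trees: a bijection between the marked points which
conjugates the dynamics and preserves edges. -/
def Equivalent {Y : Type*} [TopologicalSpace Y] (H' : HubbardTree Y) : Prop :=
  ∃ φ : X → Y,
    (∀ x : X, H.MarkedPt x → H'.MarkedPt (φ x)) ∧
    (∀ x x' : X, H.MarkedPt x → H.MarkedPt x' → φ x = φ x' → x = x') ∧
    (∀ y : Y, H'.MarkedPt y → ∃ x : X, H.MarkedPt x ∧ φ x = y) ∧
    φ H.c0 = H'.c0 ∧
    (∀ x : X, H.MarkedPt x → φ (H.f x) = H'.f (φ x)) ∧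
    (∀ x x' : X, H.MarkedPt x → H.MarkedPt x' →
      (H.IsEdge x x' ↔ H'.IsEdge (φ x) (φ x')))

end HubbardTree

/-! ### Combinatorics of kneading sequences -/

/-- The function `ρ_ν(n) = inf { k > n : ν_k ≠ ν_{k-n} } ∈ ℕ ∪ {∞}` (sequences are
1-indexed). -/
noncomputable def rho (ν : ℕ → Sym) (n : ℕ) : ℕ∞ :=
  sInf {e : ℕ∞ | ∃ j : ℕ, e = (j : ℕ∞) ∧ n < j ∧ ν j ≠ ν (j - n)}

/-- `RhoOrbit ν k m` means that `m` belongs to the `ρ`-orbit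
`k → ρ(k) → ρ(ρ(k)) → ⋯` of `k` (stopped before reaching `∞`). -/
inductive RhoOrbit (ν : ℕ → Sym) : ℕ → ℕ → Prop
  | refl (k : ℕ) : RhoOrbit ν k k
  | step {k m j : ℕ} : RhoOrbit ν k m → rho ν m = (j : ℕ∞) → RhoOrbit ν k j

/-- `m` occurs in the internal address `1 → ρ(1) → ρ(ρ(1)) → ⋯` of `ν`. -/
def InternalAddress (ν : ℕ → Sym) (m : ℕ) : Prop := RhoOrbit ν 1 m

/-- `ν` is a `*`-periodic kneading sequence of (exact) period `n`:
`ν = overline(1 ν₂ … ν_{n-1} *)`. -/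
def StarPeriodic (ν : ℕ → Sym) (n : ℕ) : Prop :=
  2 ≤ n ∧ ν 1 = Sym.one ∧ ν n = Sym.star ∧
    (∀ k, 1 ≤ k → ν (k + n) = ν k) ∧
    (∀ k, 1 ≤ k → k < n → ν k ≠ Sym.star)

/-- `ν` fails the admissibility condition for period `m`. -/
def FailsAdmissibility (ν : ℕ → Sym) (m : ℕ) : Prop :=
  1 ≤ m ∧
  ¬ InternalAddress ν m ∧
  (∀ k : ℕ, k ∣ m → 1 ≤ k → k < m → rho ν k ≤ (m : ℕ∞)) ∧
  ∃ R r : ℕ, rho ν m = (R : ℕ∞) ∧ 1 ≤ r ∧ r ≤ m ∧ r ≡ R [MOD m] ∧ RhoOrbit ν r m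

open Classical in
/-- The number `q(m)` of arms predicted by the kneading sequence, where
`ρ(m) = R < ∞` and `r ∈ {1,…,m}` is congruent to `R` modulo `m`. -/
noncomputable def qArms (ν : ℕ → Sym) (m R r : ℕ) : ℕ :=
  if RhoOrbit ν r m then (R - r) / m + 1 else (R - r) / m + 2


/-! ### Embeddings into the plane and cyclic order of arms -/

/-- Three points in the plane are in (strictly) counterclockwise position. -/
def Ccw (p q r : ℝ × ℝ) : Prop :=
  0 < (q.1 - p.1) * (r.2 - p.2) - (q.2 - p.2) * (r.1 - p.1)

namespace HubbardTree

variable {X : Type*} [TopologicalSpace X] (H : HubbardTree X)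

/-- Under an embedding `φ` of the tree into the plane, `p` is a first exit point of
the arm `C` at `x` through the circle of radius `ε` around `φ x`: `p = φ y` for a
point `y ∈ C` at distance exactly `ε`, such that the arc from `x` to `y` stays
within distance `< ε` before reaching `y`. -/
def ExitPt (φ : X → ℝ × ℝ) (x : X) (C : Set X) (ε : ℝ) (p : ℝ × ℝ) : Prop :=
  ∃ y ∈ C, φ y = p ∧ dist (φ x) p = ε ∧
    ∀ z ∈ H.arc x y, z ≠ y → dist (φ x) (φ z) < ε

/-- The local arms at `x` represented by the arms `C, C', C''` are in
counterclockwise cyclic order under the embedding `φ`. -/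
def ArmsCcw (φ : X → ℝ × ℝ) (x : X) (C C' C'' : Set X) : Prop :=
  ∃ ε₀ : ℝ, 0 < ε₀ ∧ ∀ ε : ℝ, 0 < ε → ε < ε₀ →
    ∀ p p' p'' : ℝ × ℝ, H.ExitPt φ x C ε p → H.ExitPt φ x C' ε p' →
      H.ExitPt φ x C'' ε p'' → Ccw p p' p''

/-- `f` respects the cyclic order (induced by the embedding `φ`) of the local arms
at all branch points. -/
def RespectsCyclicOrder (φ : X → ℝ × ℝ) : Prop :=
  ∀ x : X, IsBranchPt x →
    ∀ C C' C'' : Set X, C ∈ arms x → C' ∈ arms x → C'' ∈ arms x →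
      C ≠ C' → C' ≠ C'' → C ≠ C'' → H.ArmsCcw φ x C C' C'' →
      ∀ D D' D'' : Set X, MapsLocalArm H.f x C D → MapsLocalArm H.f x C' D' →
        MapsLocalArm H.f x C'' D'' → H.ArmsCcw φ (H.f x) D D' D''

/-- The Hubbard tree can be topologically embedded into the plane `ℝ²` so that `f`
respects the cyclic order of the local arms at all branch points. -/
def PlanarEmbeddable : Prop :=
  ∃ φ : X → ℝ × ℝ, Topology.IsEmbedding φ ∧ H.RespectsCyclicOrder φ

end HubbardTree


/-!
In a uniquely arcwise connected Hausdorff space a path cannot close up injectively, so a path that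
is injective near every interior parameter is injective; hence `f` is injective on every arc
without `c₀` in its interior, and maps it onto the arc between the images. Two arms at `x` that
`f` sends into the same arm at `f x` therefore have points with a common image, because arcs that
leave `f x` inside one arm share an initial piece. Near `x ≠ c₀`, where `f` is injective, this is
impossible, so the number of arms does not decrease from `x` to `f x`.

Consequently endpoints pull back to endpoints off `c₀`. Every arm at `c₀` contains an endpoint,
which lies on the critical orbit, and pulling it back along the orbit shows that `c₁` is an
endpoint. So all arms at `c₀` map into the single arm at `c₁` and have points with a common image;
as `f` is at most two-to-one, there are at most two of them. Hence branch points stay branch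
points distinct from `c₀` under iteration, with a nondecreasing number of arms, and as there are
only finitely many branch points they are preperiodic.
-/

open Set Topology Function

universe u v

variable {X : Type u} {Y : Type v}

/-! ### Orbits -/

theorem exists_iterate_add_eq_of_finite {f : X → X} {x : X} {s : Set X} (hs : s.Finite)
    (hx : ∀ k, f^[k] x ∈ s) : ∃ k n : ℕ, 1 ≤ n ∧ f^[k + n] x = f^[k] x := by
  obtain ⟨i, j, hij, heq⟩ := hs.exists_lt_map_eq_of_forall_mem hx
  exact ⟨i, j - i, Nat.sub_pos_of_lt hij, by rw [Nat.add_sub_cancel' hij.le, heq]⟩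

theorem eq_of_monotone_iterate_of_isPeriodicPt [PartialOrder Y] {f : X → X} {φ : X → Y} {x : X}
    {k n j : ℕ} (hmono : Monotone fun i ↦ φ (f^[i] x)) (hn : 1 ≤ n)
    (hper : IsPeriodicPt f n (f^[k] x)) (hkj : k ≤ j) : φ (f^[j] x) = φ (f^[k] x) := by
  refine le_antisymm ?_ (hmono hkj)
  have hreturn : f^[j * n + k] x = f^[k] x := by
    rw [iterate_add_apply]
    exact hper.const_mul j
  calc φ (f^[j] x) ≤ φ (f^[j * n + k] x) := hmono (by nlinarith)
    _ = φ (f^[k] x) := by rw [hreturn]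

/-! ### Arms -/

variable [TopologicalSpace X] [TopologicalSpace Y]

section Arms

variable {c p w x : X} {C D : Set X}

theorem mem_armTo_self (h : x ≠ c) : x ∈ armTo c x :=
  mem_connectedComponentIn h

theorem armTo_mem_arms (h : x ≠ c) : armTo c x ∈ arms c :=
  ⟨x, h, rfl⟩

theorem armTo_self (c : X) : armTo c c = ∅ :=
  connectedComponentIn_eq_empty (by simp)

theorem self_notMem_armTo : c ∉ armTo c x := fun h ↦
  connectedComponentIn_subset _ _ h rfl

theorem isPreconnected_armTo : IsPreconnected (armTo c x) :=
  isPreconnected_connectedComponentIn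

theorem subset_armTo_of_isPreconnected {s : Set X} (hs : IsPreconnected s) (hx : x ∈ s)
    (hc : c ∉ s) : s ⊆ armTo c x :=
  hs.subset_connectedComponentIn hx (subset_compl_singleton_iff.2 hc)

theorem eq_armTo_of_mem (hC : C ∈ arms c) (hx : x ∈ C) : C = armTo c x := by
  obtain ⟨y, -, rfl⟩ := hC
  exact connectedComponentIn_eq hx

theorem arms_eq_of_mem (hC : C ∈ arms c) (hD : D ∈ arms c) (hxC : x ∈ C) (hxD : x ∈ D) :
    C = D :=
  (eq_armTo_of_mem hC hxC).trans (eq_armTo_of_mem hD hxD).symm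

theorem notMem_of_mem_arms (hC : C ∈ arms c) : c ∉ C := by
  obtain ⟨y, -, rfl⟩ := hC
  exact self_notMem_armTo

theorem ne_of_mem_arm (hC : C ∈ arms c) (hx : x ∈ C) : x ≠ c :=
  ne_of_mem_of_not_mem hx (notMem_of_mem_arms hC)

theorem nonempty_of_mem_arms (hC : C ∈ arms c) : C.Nonempty := by
  obtain ⟨y, hy, rfl⟩ := hC
  exact ⟨y, mem_armTo_self hy⟩

theorem isPreconnected_of_mem_arms (hC : C ∈ arms c) : IsPreconnected C := by
  obtain ⟨y, -, rfl⟩ := hC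
  exact isPreconnected_armTo

theorem arms_nonempty [Nontrivial X] (c : X) : (arms c).Nonempty :=
  let ⟨_, hx⟩ := exists_ne c
  ⟨_, armTo_mem_arms hx⟩

theorem isEndpoint_of_forall_eq_armTo (hp : p ≠ x) (h : ∀ C ∈ arms x, C = armTo x p) :
    IsEndpoint x :=
  ncard_eq_one.2 ⟨armTo x p, Subset.antisymm h (singleton_subset_iff.2 (armTo_mem_arms hp))⟩

theorem closure_subset_insert_of_mem_arms (hC : C ∈ arms c) : closure C ⊆ insert c C := by
  intro z hz
  by_cases hzc : z = c
  · exact Or.inl hzc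
  obtain ⟨x, hx⟩ := nonempty_of_mem_arms hC
  have hconn : IsPreconnected (insert z C) := (isPreconnected_of_mem_arms hC).subset_closure
    (subset_insert _ _) (insert_subset hz subset_closure)
  have hc : c ∉ insert z C := by simp [Ne.symm hzc, notMem_of_mem_arms hC]
  have hsub := subset_armTo_of_isPreconnected hconn (mem_insert_of_mem z hx) hc
  rw [← eq_armTo_of_mem hC hx] at hsub
  exact Or.inr (hsub (mem_insert z C))

theorem isClosed_insert_of_mem_arms [T1Space X] (hC : C ∈ arms c) : IsClosed (insert c C) := by
  rw [← closure_subset_iff_isClosed, insert_eq, closure_union, closure_singleton]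
  exact union_subset subset_union_left (closure_subset_insert_of_mem_arms hC)

theorem compl_eq_insert_biUnion_arms (hC : C ∈ arms c) :
    Cᶜ = {c} ∪ ⋃ D ∈ arms c \ {C}, insert c D := by
  ext w
  simp only [mem_compl_iff, mem_union, mem_singleton_iff, mem_iUnion, mem_insert_iff]
  constructor
  · intro hw
    by_cases hwc : w = c
    · exact Or.inl hwc
    · refine Or.inr ⟨armTo c w, ⟨armTo_mem_arms hwc, ?_⟩, Or.inr (mem_armTo_self hwc)⟩
      rintro rfl
      exact hw (mem_armTo_self hwc)
  · rintro (rfl | ⟨D, ⟨hD, hDC⟩, rfl | hwD⟩) hwC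
    · exact notMem_of_mem_arms hC hwC
    · exact notMem_of_mem_arms hC hwC
    · exact hDC (arms_eq_of_mem hD hC hwD hwC)

theorem isOpen_of_mem_arms [T1Space X] (hfin : (arms c).Finite) (hC : C ∈ arms c) : IsOpen C := by
  rw [← isClosed_compl_iff, compl_eq_insert_biUnion_arms hC]
  exact isClosed_singleton.union <| (hfin.subset sdiff_subset).isClosed_biUnion
    fun D hD ↦ isClosed_insert_of_mem_arms hD.1

theorem isPreconnected_insert_of_mem_arms [PreconnectedSpace X] (hC : C ∈ arms c)
    (hopen : IsOpen C) : IsPreconnected (insert c C) := by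
  refine (isPreconnected_of_mem_arms hC).subset_closure (subset_insert _ _)
    (insert_subset ?_ subset_closure)
  by_contra hc
  have hclosed : IsClosed C := closure_subset_iff_isClosed.1 fun z hz ↦
    (closure_subset_insert_of_mem_arms hC hz).resolve_left (ne_of_mem_of_not_mem hz hc)
  have huniv := IsClopen.eq_univ ⟨hclosed, hopen⟩ (nonempty_of_mem_arms hC)
  exact notMem_of_mem_arms hC (huniv ▸ mem_univ c)

theorem isPreconnected_compl_of_mem_arms [PreconnectedSpace X] (hopen : ∀ D ∈ arms c, IsOpen D)
    (hC : C ∈ arms c) : IsPreconnected Cᶜ := by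
  rw [compl_eq_insert_biUnion_arms hC, ← sUnion_image, ← sUnion_insert]
  refine isPreconnected_sUnion c _ ?_ ?_
  · rintro _ (rfl | ⟨D, -, rfl⟩)
    exacts [rfl, mem_insert c D]
  · rintro _ (rfl | ⟨D, hD, rfl⟩)
    exacts [isPreconnected_singleton, isPreconnected_insert_of_mem_arms hD.1 (hopen D hD.1)]

theorem compl_subset_armTo [T1Space X] [PreconnectedSpace X] (hfin : (arms c).Finite)
    (hC : C ∈ arms c) (hw : w ∈ C) (hp : p ∉ C) : Cᶜ ⊆ armTo w p :=
  subset_armTo_of_isPreconnected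
    (isPreconnected_compl_of_mem_arms (fun _ ↦ isOpen_of_mem_arms hfin) hC) hp (not_not_intro hw)

end Arms

/-! ### Endpoints in arms -/

section Shadow

variable {p x z : X} {C : Set X}

/-- The shadow of `x` seen from `p`: the points that cannot be joined to `p` within `X \ {x}`.
Containment in the shadow orders the points of a tree by their distance from the root `p`, and
endpoints are found as maximal elements. For `x = p` it is the whole space. -/
def shadow (p x : X) : Set X := (armTo x p)ᶜ

theorem mem_shadow_self (p x : X) : x ∈ shadow p x :=
  self_notMem_armTo

theorem shadow_subset_shadow (hz : z ∈ shadow p x) : shadow p z ⊆ shadow p x := by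
  refine compl_subset_compl.2 ?_
  rcases eq_or_ne p x with rfl | hpx
  · simp [armTo_self]
  · exact subset_armTo_of_isPreconnected isPreconnected_armTo (mem_armTo_self hpx) hz

theorem isClosed_shadow [T1Space X] (hfin : (arms x).Finite) : IsClosed (shadow p x) := by
  rw [shadow, isClosed_compl_iff]
  rcases eq_or_ne p x with rfl | hpx
  · simp [armTo_self]
  · exact isOpen_of_mem_arms hfin (armTo_mem_arms hpx)

theorem shadow_subset_of_mem_arms [T1Space X] [PreconnectedSpace X] (hfin : (arms p).Finite)
    (hC : C ∈ arms p) (hx : x ∈ C) : shadow p x ⊆ C :=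
  compl_subset_comm.1 (compl_subset_armTo hfin hC hx (notMem_of_mem_arms hC))

theorem exists_forall_mem_shadow_of_isChain [T1Space X] [CompactSpace X]
    (hfin : ∀ x : X, (arms x).Finite) {s : Set X} (hs : s.Nonempty)
    (hchain : IsChain (fun x y ↦ y ∈ shadow p x) s) : ∃ z, ∀ x ∈ s, z ∈ shadow p x := by
  have := hs.to_subtype
  have hdir : Directed (· ⊇ ·) fun x : s ↦ shadow p (x : X) := by
    intro a b
    rcases eq_or_ne a b with rfl | hab
    · exact ⟨a, Subset.rfl, Subset.rfl⟩
    rcases hchain a.2 b.2 (Subtype.coe_injective.ne hab) with h | h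
    · exact ⟨b, shadow_subset_shadow h, Subset.rfl⟩
    · exact ⟨a, Subset.rfl, shadow_subset_shadow h⟩
  obtain ⟨z, hz⟩ := IsCompact.nonempty_iInter_of_directed_nonempty_isCompact_isClosed _ hdir
    (fun x ↦ ⟨x, mem_shadow_self p x⟩) (fun x ↦ (isClosed_shadow (hfin x)).isCompact)
    (fun x ↦ isClosed_shadow (hfin x))
  exact ⟨z, fun x hx ↦ mem_iInter.1 hz ⟨x, hx⟩⟩

theorem exists_shadow_maximal [T1Space X] [CompactSpace X] [PreconnectedSpace X]
    (hfin : ∀ x : X, (arms x).Finite) (hC : C ∈ arms p) :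
    ∃ m ∈ C, ∀ z ∈ shadow p m, m ∈ shadow p z := by
  have hbounded : ∀ s : Set C, IsChain (fun x y : C ↦ (y : X) ∈ shadow p x) s →
      ∃ z : C, ∀ x ∈ s, (z : X) ∈ shadow p x := by
    intro s hs
    rcases s.eq_empty_or_nonempty with rfl | ⟨x, hx⟩
    · obtain ⟨x, hx⟩ := nonempty_of_mem_arms hC
      exact ⟨⟨x, hx⟩, by simp⟩
    have himage : IsChain (fun x y ↦ y ∈ shadow p x) (Subtype.val '' s) :=
      hs.image_of_map_rel _ _ Subtype.val fun _ _ h ↦ h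
    obtain ⟨z, hz⟩ := exists_forall_mem_shadow_of_isChain hfin ⟨x, mem_image_of_mem _ hx⟩ himage
    have hzC := shadow_subset_of_mem_arms (hfin p) hC x.2 (hz x (mem_image_of_mem _ hx))
    exact ⟨⟨z, hzC⟩, fun a ha ↦ hz a (mem_image_of_mem _ ha)⟩
  obtain ⟨⟨m, hm⟩, hmax⟩ := exists_maximal_of_chains_bounded hbounded
    (fun hab hbc ↦ shadow_subset_shadow hab hbc)
  exact ⟨m, hm, fun z hz ↦ hmax ⟨z, shadow_subset_of_mem_arms (hfin p) hC hm hz⟩ hz⟩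

theorem exists_isEndpoint_mem [T1Space X] [CompactSpace X] [PreconnectedSpace X]
    (hfin : ∀ x : X, (arms x).Finite) (hC : C ∈ arms p) : ∃ e ∈ C, IsEndpoint e := by
  obtain ⟨m, hm, hmax⟩ := exists_shadow_maximal hfin hC
  have hpm : p ≠ m := (ne_of_mem_arm hC hm).symm
  refine ⟨m, hm, isEndpoint_of_forall_eq_armTo hpm fun D hD ↦ ?_⟩
  by_contra hDp
  obtain ⟨w, hw⟩ := nonempty_of_mem_arms hD
  have hpD : p ∉ D := fun h ↦ hDp (eq_armTo_of_mem hD h)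
  have hw_shadow : w ∈ shadow p m := fun h ↦
    hDp (arms_eq_of_mem hD (armTo_mem_arms hpm) hw h)
  exact hmax w hw_shadow (compl_subset_armTo (hfin m) hD hw hpD (notMem_of_mem_arms hD))

end Shadow

/-! ### Arcs -/

section ArcBetween

variable {x y : X} {A : Set X}

theorem isArcBetween_image_Icc [T2Space X] {g : ℝ → X} {a b : ℝ} (hab : a ≤ b)
    (hg : ContinuousOn g (Icc a b)) (hinj : InjOn g (Icc a b)) :
    IsArcBetween (g '' Icc a b) (g a) (g b) := by
  rcases hab.eq_or_lt with rfl | hlt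
  · exact Or.inl ⟨rfl, by simp⟩
  let e := (iccHomeoI a b hlt).symm
  let γ : Path (g a) (g b) :=
    { toFun := fun t ↦ g (e t)
      continuous_toFun := hg.comp_continuous (continuous_subtype_val.comp e.continuous)
        fun t ↦ (e t).2
      source' := by simp [e]
      target' := by simp [e] }
  have hγ : Injective γ := fun s t hst ↦ e.injective (Subtype.ext (hinj (e s).2 (e t).2 hst))
  refine Or.inr ⟨hinj.ne (left_mem_Icc.2 hab) (right_mem_Icc.2 hab) hlt.ne, γ,
    (γ.continuous.isClosedEmbedding hγ).isEmbedding, ?_⟩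
  calc range γ = g '' range (fun t ↦ (e t : ℝ)) := range_comp g _
    _ = g '' Icc a b := by
      rw [show (fun t ↦ (e t : ℝ)) = Subtype.val ∘ e from rfl, e.surjective.range_comp,
        Subtype.range_coe]

theorem IsArcBetween.symm (h : IsArcBetween A x y) : IsArcBetween A y x := by
  rcases h with ⟨rfl, hA⟩ | ⟨hne, γ, hγ, hA⟩
  · exact Or.inl ⟨rfl, hA⟩
  · exact Or.inr ⟨hne.symm, γ.symm, hγ.comp unitInterval.symmHomeomorph.isEmbedding,
      γ.symm_range.trans hA⟩

theorem IsArcBetween.exists_param (h : IsArcBetween A x y) :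
    ∃ (g : ℝ → X) (b : ℝ), 0 ≤ b ∧ Continuous g ∧ InjOn g (Icc 0 b) ∧ g 0 = x ∧ g b = y ∧
      A = g '' Icc 0 b := by
  rcases h with ⟨rfl, rfl⟩ | ⟨-, γ, hγ, rfl⟩
  · exact ⟨fun _ ↦ x, 0, le_rfl, continuous_const, by simp, rfl, rfl, by simp⟩
  · refine ⟨γ.extend, 1, zero_le_one, γ.continuous_extend, fun s hs t ht hst ↦ ?_,
      γ.extend_zero, γ.extend_one, ?_⟩
    · rw [γ.extend_apply hs, γ.extend_apply ht] at hst
      exact congrArg Subtype.val (hγ.injective hst)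
    · exact (γ.image_extend_of_subset Subset.rfl).symm

end ArcBetween

/-- Spaces in which any two points are joined by exactly one arc, as in the definition of a
topological tree. The Hausdorff axiom is part of the notion, so that injective paths are arcs. -/
class UniquelyArcConnectedSpace (X : Type*) [TopologicalSpace X] : Prop extends T2Space X where
  existsUnique_isArcBetween : ∀ x y : X, ∃! A : Set X, IsArcBetween A x y

section Arcs

variable [UniquelyArcConnectedSpace X] [UniquelyArcConnectedSpace Y]

/-- The arc `[x, y]`. -/
noncomputable def arcBetween (x y : X) : Set X :=
  (UniquelyArcConnectedSpace.existsUnique_isArcBetween x y).choose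

theorem isArcBetween_arcBetween (x y : X) : IsArcBetween (arcBetween x y) x y :=
  (UniquelyArcConnectedSpace.existsUnique_isArcBetween x y).choose_spec.1

theorem IsArcBetween.eq_arcBetween {A : Set X} {x y : X} (h : IsArcBetween A x y) :
    A = arcBetween x y :=
  (UniquelyArcConnectedSpace.existsUnique_isArcBetween x y).choose_spec.2 A h

theorem arcBetween_comm (x y : X) : arcBetween x y = arcBetween y x :=
  (isArcBetween_arcBetween x y).symm.eq_arcBetween

theorem image_Icc_eq_arcBetween {g : ℝ → X} {a b : ℝ} (hab : a ≤ b)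
    (hg : ContinuousOn g (Icc a b)) (hinj : InjOn g (Icc a b)) :
    g '' Icc a b = arcBetween (g a) (g b) :=
  (isArcBetween_image_Icc hab hg hinj).eq_arcBetween

theorem left_mem_arcBetween (x y : X) : x ∈ arcBetween x y := by
  obtain ⟨g, b, hb, -, -, rfl, rfl, harc⟩ := (isArcBetween_arcBetween x y).exists_param
  exact harc ▸ mem_image_of_mem g (left_mem_Icc.2 hb)

theorem right_mem_arcBetween (x y : X) : y ∈ arcBetween x y :=
  arcBetween_comm y x ▸ left_mem_arcBetween y x

theorem isCompact_arcBetween (x y : X) : IsCompact (arcBetween x y) := by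
  obtain ⟨g, b, -, hg, -, -, -, harc⟩ := (isArcBetween_arcBetween x y).exists_param
  exact harc ▸ isCompact_Icc.image hg

theorem isPreconnected_arcBetween (x y : X) : IsPreconnected (arcBetween x y) := by
  obtain ⟨g, b, -, hg, -, -, -, harc⟩ := (isArcBetween_arcBetween x y).exists_param
  exact harc ▸ isPreconnected_Icc.image g hg.continuousOn

instance : PreconnectedSpace X where
  isPreconnected_univ := isPreconnected_of_forall_pair fun x _ y _ ↦
    ⟨arcBetween x y, subset_univ _, left_mem_arcBetween x y, right_mem_arcBetween x y,
      isPreconnected_arcBetween x y⟩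

theorem exists_arcBetween_param (x y : X) :
    ∃ (g : ℝ → X) (b : ℝ), 0 ≤ b ∧ Continuous g ∧ InjOn g (Icc 0 b) ∧ g 0 = x ∧ g b = y ∧
      arcBetween x y = g '' Icc 0 b ∧ ∀ t ∈ Icc 0 b, arcBetween x (g t) = g '' Icc 0 t := by
  obtain ⟨g, b, hb, hg, hinj, rfl, rfl, harc⟩ := (isArcBetween_arcBetween x y).exists_param
  exact ⟨g, b, hb, hg, hinj, rfl, rfl, harc, fun t ht ↦ (image_Icc_eq_arcBetween ht.1
    hg.continuousOn (hinj.mono (Icc_subset_Icc_right ht.2))).symm⟩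

section Subarcs

variable {c x q r : X} {C U : Set X}

theorem arcBetween_subset_arcBetween (hq : q ∈ arcBetween c x) :
    arcBetween c q ⊆ arcBetween c x := by
  obtain ⟨g, b, -, -, -, rfl, rfl, harc, hsub⟩ := exists_arcBetween_param c x
  obtain ⟨t, ht, rfl⟩ := harc ▸ hq
  rw [harc, hsub t ht]
  exact image_mono (Icc_subset_Icc_right ht.2)

theorem mem_arcBetween_total (hq : q ∈ arcBetween c x) (hr : r ∈ arcBetween c x) :
    q ∈ arcBetween c r ∨ r ∈ arcBetween c q := by
  obtain ⟨g, b, -, -, -, rfl, rfl, harc, hsub⟩ := exists_arcBetween_param c x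
  obtain ⟨s, hs, rfl⟩ := harc ▸ hq
  obtain ⟨t, ht, rfl⟩ := harc ▸ hr
  rw [hsub s hs, hsub t ht]
  exact (le_total s t).imp (fun hst ↦ ⟨s, ⟨hs.1, hst⟩, rfl⟩) (fun hts ↦ ⟨t, ⟨ht.1, hts⟩, rfl⟩)

theorem mem_arm_of_mem_arcBetween (hC : C ∈ arms c) (hx : x ∈ C) (hq : q ∈ arcBetween c x)
    (hqc : q ≠ c) : q ∈ C := by
  obtain ⟨g, b, -, hg, hinj, rfl, rfl, harc, -⟩ := exists_arcBetween_param c x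
  obtain ⟨s, hs, rfl⟩ := harc ▸ hq
  have hs_pos : 0 < s := hs.1.lt_of_ne fun h ↦ hqc (by rw [← h])
  have hconn : IsPreconnected (g '' Icc s b) := isPreconnected_Icc.image g hg.continuousOn
  rw [eq_armTo_of_mem hC hx]
  refine subset_armTo_of_isPreconnected hconn ⟨b, right_mem_Icc.2 hs.2, rfl⟩ ?_
    ⟨s, left_mem_Icc.2 hs.2, rfl⟩
  rintro ⟨t, ht, hgt⟩
  have ht_zero : t = 0 :=
    hinj ⟨hs.1.trans ht.1, ht.2⟩ (left_mem_Icc.2 (hs.1.trans hs.2)) hgt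
  exact (hs_pos.trans_le ht.1).ne' ht_zero

theorem exists_arcBetween_subset_of_mem_nhds (hC : C ∈ arms c) (hU : U ∈ 𝓝 c) :
    ∃ y ∈ C, arcBetween c y ⊆ U := by
  obtain ⟨x, hx⟩ := nonempty_of_mem_arms hC
  obtain ⟨g, b, hb, hg, hinj, rfl, rfl, harc, hsub⟩ := exists_arcBetween_param c x
  have hb_pos : 0 < b := hb.lt_of_ne fun h ↦ ne_of_mem_arm hC hx (by rw [← h])
  obtain ⟨t, ht_pos, ht_sub⟩ := mem_nhdsGE_iff_exists_Icc_subset.1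
    (mem_nhdsWithin_of_mem_nhds (hg.continuousAt.preimage_mem_nhds hU))
  have hmin : min t b ∈ Icc 0 b := ⟨le_min ht_pos.le hb, min_le_right t b⟩
  refine ⟨g (min t b), mem_arm_of_mem_arcBetween hC hx (harc ▸ mem_image_of_mem g hmin) ?_, ?_⟩
  · exact hinj.ne hmin (left_mem_Icc.2 hb) (lt_min ht_pos hb_pos).ne'
  · rw [hsub _ hmin, image_subset_iff]
    exact (Icc_subset_Icc_right (min_le_left t b)).trans ht_sub

theorem exists_isEndpoint_mem_arcBetween [CompactSpace X] (hfin : ∀ x : X, (arms x).Finite)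
    (hxc : x ≠ c) : ∃ e, IsEndpoint e ∧ x ∈ arcBetween c e := by
  by_cases hx : IsEndpoint x
  · exact ⟨x, hx, right_mem_arcBetween c x⟩
  obtain ⟨C, hC, hCc⟩ : ∃ C ∈ arms x, C ≠ armTo x c := by
    by_contra! h
    exact hx (isEndpoint_of_forall_eq_armTo hxc.symm h)
  obtain ⟨e, heC, he⟩ := exists_isEndpoint_mem hfin hC
  refine ⟨e, he, ?_⟩
  by_contra hxe
  have hmem := subset_armTo_of_isPreconnected (isPreconnected_arcBetween c e)
    (left_mem_arcBetween c e) hxe (right_mem_arcBetween c e)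
  exact hCc (arms_eq_of_mem hC (armTo_mem_arms hxc.symm) heC hmem)

end Subarcs

/-! ### Locally injective paths -/

theorem exists_ne_map_eq_forall_dist_le {K : Type*} [MetricSpace K] [CompactSpace K]
    {Z : Type*} [TopologicalSpace Z] [T2Space Z] {g : K → Z} (hg : Continuous g)
    (hloc : IsLocallyInjective g) (hinj : ¬ Injective g) :
    ∃ s t, s ≠ t ∧ g s = g t ∧ ∀ u v, u ≠ v → g u = g v → dist s t ≤ dist u v := by
  have hclosed : IsClosed {q : K × K | g q.1 = g q.2} :=
    isClosed_eq (hg.comp continuous_fst) (hg.comp continuous_snd)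
  have : CompactSpace (g.Pullback g) := isCompact_iff_compactSpace.1 hclosed.isCompact
  have hcompact : IsCompact (g.pullbackDiagonalᶜ) :=
    (isLocallyInjective_iff_isOpen_diagonal.1 hloc).isClosed_compl.isCompact
  have hnonempty : (g.pullbackDiagonalᶜ).Nonempty := by
    obtain ⟨s, t, heq, hne⟩ := not_injective_iff.1 hinj
    exact ⟨⟨(s, t), heq⟩, hne⟩
  obtain ⟨⟨⟨s, t⟩, heq⟩, hne, hmin⟩ := hcompact.exists_isMinOn hnonempty
    (f := fun q ↦ dist q.1.1 q.1.2) (by fun_prop)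
  exact ⟨s, t, hne, heq, fun u v huv h ↦ hmin (a := ⟨(u, v), h⟩) huv⟩

theorem ne_of_injOn_Ioc {g : ℝ → X} {a b : ℝ} (hab : a < b) (hg : ContinuousOn g (Icc a b))
    (hinj : InjOn g (Ioc a b)) : g a ≠ g b := by
  -- Otherwise the two halves of the loop would be two arcs between the same points.
  intro hloop
  obtain ⟨m, ham, hmb⟩ := exists_between hab
  obtain ⟨r, har, hrm⟩ := exists_between ham
  have hright : g '' Icc m b = arcBetween (g m) (g b) :=
    image_Icc_eq_arcBetween hmb.le (hg.mono (Icc_subset_Icc_left ham.le))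
      (hinj.mono (Icc_subset_Ioc ham le_rfl))
  have hinj_left : InjOn g (Icc a m) := by
    rw [← Ioc_insert_left ham.le, injOn_insert left_notMem_Ioc]
    refine ⟨hinj.mono (Ioc_subset_Ioc_right hmb.le), ?_⟩
    rintro ⟨t, ht, hta⟩
    have htb := hinj ⟨ht.1, ht.2.trans hmb.le⟩ (right_mem_Ioc.2 hab) (hta.trans hloop)
    exact (ht.2.trans_lt hmb).ne htb
  have hleft : g '' Icc a m = arcBetween (g a) (g m) :=
    image_Icc_eq_arcBetween ham.le (hg.mono (Icc_subset_Icc_right hmb.le)) hinj_left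
  have hhalves : g '' Icc a m = g '' Icc m b := by
    rw [hleft, hright, hloop, arcBetween_comm]
  obtain ⟨t, ht, htr⟩ : g r ∈ g '' Icc m b := hhalves ▸ mem_image_of_mem g ⟨har.le, hrm.le⟩
  have htr' := hinj ⟨ham.trans_le ht.1, ht.2⟩ ⟨har, (hrm.trans hmb).le⟩ htr
  exact (hrm.trans_le ht.1).ne' htr'

theorem injOn_Icc_of_injOn_Ioc {g : ℝ → X} {a b : ℝ} (hg : ContinuousOn g (Icc a b))
    (hinj : InjOn g (Ioc a b)) : InjOn g (Icc a b) := by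
  rcases lt_or_ge b a with hba | hab
  · simp [Icc_eq_empty_of_lt hba]
  rw [← Ioc_insert_left hab, injOn_insert left_notMem_Ioc]
  refine ⟨hinj, ?_⟩
  rintro ⟨t, ht, hta⟩
  exact ne_of_injOn_Ioc ht.1 (hg.mono (Icc_subset_Icc_right ht.2))
    (hinj.mono (Ioc_subset_Ioc_right ht.2)) hta.symm

theorem injOn_Icc_of_injOn_Ico {g : ℝ → X} {a b : ℝ} (hg : ContinuousOn g (Icc a b))
    (hinj : InjOn g (Ico a b)) : InjOn g (Icc a b) := by
  have hrefl : InjOn (g ∘ Neg.neg) (Icc (-b) (-a)) :=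
    injOn_Icc_of_injOn_Ioc
      (hg.comp continuousOn_neg fun t ht ↦ ⟨le_neg_of_le_neg ht.2, neg_le_of_neg_le ht.1⟩)
      (hinj.comp neg_injective.injOn fun t ht ↦ ⟨le_neg_of_le_neg ht.2, neg_lt_of_neg_lt ht.1⟩)
  intro s hs t ht hst
  refine neg_injective (hrefl ⟨neg_le_neg hs.2, neg_le_neg hs.1⟩
    ⟨neg_le_neg ht.2, neg_le_neg ht.1⟩ ?_)
  simpa only [comp_apply, neg_neg] using hst

theorem injOn_Icc_of_locally_injOn {g : ℝ → X} {a b : ℝ} (hg : ContinuousOn g (Icc a b))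
    (hloc : ∀ t ∈ Icc a b, ∃ V ∈ 𝓝 t, InjOn g V) : InjOn g (Icc a b) := by
  -- A coincidence `g s = g t` with `|s - t|` minimal bounds a loop that is injective on `(s, t]`.
  by_contra hinj
  have hloc' : IsLocallyInjective ((Icc a b).domRestrict g) := by
    intro t
    obtain ⟨V, hV, hVinj⟩ := hloc t t.2
    exact ⟨Subtype.val ⁻¹' interior V, isOpen_interior.preimage continuous_subtype_val,
      mem_interior_iff_mem_nhds.2 hV, fun u hu v hv huv ↦
        Subtype.ext (hVinj (interior_subset hu) (interior_subset hv) huv)⟩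
  obtain ⟨s, t, hne, heq, hmin⟩ := exists_ne_map_eq_forall_dist_le hg.domRestrict hloc'
    (mt injOn_iff_injective.2 hinj)
  wlog hst : s < t generalizing s t
  · exact this t s hne.symm heq.symm (fun u v ↦ dist_comm s t ▸ hmin u v)
      (hne.lt_or_gt.resolve_left hst)
  have hlt : (s : ℝ) < t := hst
  have hIcc : Icc (s : ℝ) t ⊆ Icc a b := Icc_subset_Icc s.2.1 t.2.2
  refine ne_of_injOn_Ioc hlt (hg.mono hIcc) (fun u hu v hv huv ↦ ?_) heq
  by_contra huv_ne
  have hle : dist (s : ℝ) t ≤ dist u v :=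
    hmin ⟨u, hIcc (Ioc_subset_Icc_self hu)⟩ ⟨v, hIcc (Ioc_subset_Icc_self hv)⟩
      (fun h ↦ huv_ne (congrArg Subtype.val h)) huv
  rw [Real.dist_eq, Real.dist_eq, abs_sub_comm, abs_of_pos (sub_pos.2 hlt)] at hle
  have hclose : |u - v| < t - s := abs_sub_lt_iff.2
    ⟨by linarith [hu.2, hv.1], by linarith [hv.2, hu.1]⟩
  exact hclose.not_ge hle

theorem injOn_Icc_of_locally_injOn_Ioo {g : ℝ → X} {a b : ℝ} (hg : ContinuousOn g (Icc a b))
    (hloc : ∀ t ∈ Ioo a b, ∃ V ∈ 𝓝 t, InjOn g V) : InjOn g (Icc a b) := by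
  have hIcc : ∀ s ∈ Ioo a b, ∀ t ∈ Ioo a b, InjOn g (Icc s t) := fun s hs t ht ↦
    injOn_Icc_of_locally_injOn (hg.mono (Icc_subset_Icc hs.1.le ht.2.le))
      fun u hu ↦ hloc u ⟨hs.1.trans_le hu.1, hu.2.trans_lt ht.2⟩
  have hIoo : InjOn g (Ioo a b) := fun s hs t ht hst ↦
    hIcc (min s t) ⟨lt_min hs.1 ht.1, min_lt_of_left_lt hs.2⟩ (max s t)
      ⟨lt_max_of_lt_left hs.1, max_lt hs.2 ht.2⟩ ⟨min_le_left s t, le_max_left s t⟩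
      ⟨min_le_right s t, le_max_right s t⟩ hst
  have hIco : InjOn g (Ico a b) := by
    intro s hs t ht hst
    have hmax : max s t < b := max_lt hs.2 ht.2
    exact injOn_Icc_of_injOn_Ioc (hg.mono (Icc_subset_Icc_right hmax.le))
      (hIoo.mono (Ioc_subset_Ioo_right hmax)) ⟨hs.1, le_max_left s t⟩ ⟨ht.1, le_max_right s t⟩ hst
  exact injOn_Icc_of_injOn_Ico hg hIco

theorem injOn_arcBetween {f : X → Y} {x y : X} (hf : Continuous f)
    (hloc : ∀ z ∈ arcBetween x y \ {x, y}, ∃ U ∈ 𝓝 z, InjOn f U) :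
    InjOn f (arcBetween x y) := by
  obtain ⟨g, b, hb, hg, hinj, rfl, rfl, harc, -⟩ := exists_arcBetween_param x y
  have hcomp : InjOn (f ∘ g) (Icc 0 b) := by
    refine injOn_Icc_of_locally_injOn_Ioo (hf.comp hg).continuousOn fun t ht ↦ ?_
    have ht' := Ioo_subset_Icc_self ht
    have hend : g t ∉ ({g 0, g b} : Set X) := by
      rintro (h | h)
      · exact ht.1.ne' (hinj ht' (left_mem_Icc.2 hb) h)
      · exact ht.2.ne (hinj ht' (right_mem_Icc.2 hb) h)
    obtain ⟨U, hU, hUinj⟩ := hloc (g t) ⟨harc ▸ mem_image_of_mem g ht', hend⟩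
    refine ⟨Icc 0 b ∩ g ⁻¹' U, Filter.inter_mem (Icc_mem_nhds ht.1 ht.2)
      (hg.continuousAt.preimage_mem_nhds hU), ?_⟩
    exact hUinj.comp (hinj.mono inter_subset_left) fun u hu ↦ hu.2
  rw [harc]
  exact hcomp.image_of_comp

theorem image_arcBetween {f : X → Y} {x y : X} (hf : Continuous f)
    (hinj : InjOn f (arcBetween x y)) : f '' arcBetween x y = arcBetween (f x) (f y) := by
  obtain ⟨g, b, hb, hg, hginj, rfl, rfl, harc, -⟩ := exists_arcBetween_param x y
  rw [harc] at hinj ⊢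
  rw [← image_comp]
  exact image_Icc_eq_arcBetween hb (hf.comp hg).continuousOn
    (hinj.comp hginj (mapsTo_image g _))

theorem mapsHomeoOn_arcBetween {f : X → X} {x y : X} (hf : Continuous f)
    (hinj : InjOn f (arcBetween x y)) : MapsHomeoOn f (arcBetween x y) := by
  have := isCompact_iff_compactSpace.1 (isCompact_arcBetween x y)
  exact ((hf.comp continuous_subtype_val).isClosedEmbedding hinj.injective).isEmbedding

end Arcs

/-! ### Finite trees -/

/-- Finite topological trees. In place of a homeomorphism with a simplicial tree, finiteness is
expressed by the numbers of arms at each point, of branch points and of endpoints. -/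
class FiniteTree (X : Type*) [TopologicalSpace X] : Prop
    extends CompactSpace X, UniquelyArcConnectedSpace X where
  finite_arms : ∀ x : X, (arms x).Finite
  finite_setOf_isBranchPt : {x : X | IsBranchPt x}.Finite
  finite_setOf_isEndpoint : {x : X | IsEndpoint x}.Finite

section Directions

variable {c x y z : X}

/-- The arcs from `c` to `x` and to `y` leave `c` in the same direction, that is, they share a
point other than `c`. In a finite tree this says that `x` and `y` lie in the same arm at `c`. -/
def SameDirection [UniquelyArcConnectedSpace X] (c x y : X) : Prop :=
  ∃ q ≠ c, q ∈ arcBetween c x ∧ q ∈ arcBetween c y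

namespace SameDirection

variable [UniquelyArcConnectedSpace X]

theorem symm : SameDirection c x y → SameDirection c y x := fun ⟨q, hqc, hqx, hqy⟩ ↦
  ⟨q, hqc, hqy, hqx⟩

theorem trans : SameDirection c x y → SameDirection c y z → SameDirection c x z := by
  rintro ⟨q, hqc, hqx, hqy⟩ ⟨r, hrc, hry, hrz⟩
  rcases mem_arcBetween_total hqy hry with h | h
  · exact ⟨q, hqc, hqx, arcBetween_subset_arcBetween hrz h⟩
  · exact ⟨r, hrc, arcBetween_subset_arcBetween hqx h, hrz⟩

theorem of_mem_arcBetween (hxc : x ≠ c) (hx : x ∈ arcBetween c y) : SameDirection c x y :=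
  ⟨x, hxc, right_mem_arcBetween c x, hx⟩

end SameDirection

variable [FiniteTree X]

theorem isClosed_biUnion_arcBetween_isEndpoint (c : X) (P : X → Prop) :
    IsClosed (⋃ e ∈ {e | IsEndpoint e ∧ P e}, arcBetween c e) :=
  (FiniteTree.finite_setOf_isEndpoint.subset fun _ he ↦ he.1).isClosed_biUnion
    fun e _ ↦ (isCompact_arcBetween c e).isClosed

/- The arcs from `c` to the endpoints cover the tree. Those leaving `c` in the direction of `x` and
the others form two closed sets that meet only in `c`, so they cannot both meet the arm of `x`. -/
theorem sameDirection_of_mem_armTo (hxc : x ≠ c) (hy : y ∈ armTo c x) : SameDirection c x y := by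
  by_contra hxy
  let along (P : X → Prop) : Set X := ⋃ e ∈ {e | IsEndpoint e ∧ P e}, arcBetween c e
  have hcover : ∀ z ≠ c, ∃ e, IsEndpoint e ∧ SameDirection c z e ∧ z ∈ arcBetween c e := by
    intro z hzc
    obtain ⟨e, he, hze⟩ := exists_isEndpoint_mem_arcBetween FiniteTree.finite_arms hzc
    exact ⟨e, he, .of_mem_arcBetween hzc hze, hze⟩
  have hdir : ∀ z ≠ c, SameDirection c x z → z ∈ along (SameDirection c x) := by
    intro z hzc hxz
    obtain ⟨e, he, hdir, hze⟩ := hcover z hzc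
    exact mem_biUnion (x := e) ⟨he, hxz.trans hdir⟩ hze
  have hndir : ∀ z ≠ c, ¬ SameDirection c x z → z ∈ along (¬ SameDirection c x ·) := by
    intro z hzc hxz
    obtain ⟨e, he, hdir, hze⟩ := hcover z hzc
    exact mem_biUnion (x := e) ⟨he, fun hxe ↦ hxz (hxe.trans hdir.symm)⟩ hze
  have hne : ∀ z ∈ armTo c x, z ≠ c := fun z ↦ ne_of_mem_arm (armTo_mem_arms hxc)
  obtain ⟨z, hz, hz_dir, hz_ndir⟩ := isPreconnected_closed_iff.1 isPreconnected_armTo _ _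
    (isClosed_biUnion_arcBetween_isEndpoint c _) (isClosed_biUnion_arcBetween_isEndpoint c _)
    (fun z hz ↦ (em (SameDirection c x z)).imp (hdir z (hne z hz)) (hndir z (hne z hz)))
    ⟨x, mem_armTo_self hxc, hdir x hxc (.of_mem_arcBetween hxc (right_mem_arcBetween c x))⟩
    ⟨y, hy, hndir y (hne y hy) hxy⟩
  obtain ⟨e, ⟨-, hxe⟩, hze⟩ := mem_iUnion₂.1 hz_dir
  obtain ⟨e', ⟨-, hxe'⟩, hze'⟩ := mem_iUnion₂.1 hz_ndir
  have hzc := hne z hz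
  exact hxe' (hxe.trans ((SameDirection.of_mem_arcBetween hzc hze).symm.trans
    (.of_mem_arcBetween hzc hze')))

theorem exists_mem_forall_mem_arcBetween {D s : Set X} (hD : D ∈ arms c) (hs : s.Finite)
    (hsD : s ⊆ D) : ∃ q ∈ D, ∀ z ∈ s, q ∈ arcBetween c z := by
  induction s, hs using Set.Finite.induction_on with
  | empty =>
    obtain ⟨q, hq⟩ := nonempty_of_mem_arms hD
    exact ⟨q, hq, by simp⟩
  | @insert z s _ _ ih =>
    obtain ⟨hzD, hsD⟩ := insert_subset_iff.1 hsD
    obtain ⟨q, hqD, hq⟩ := ih hsD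
    obtain ⟨r, hrc, hrq, hrz⟩ := sameDirection_of_mem_armTo (ne_of_mem_arm hD hqD)
      (eq_armTo_of_mem hD hqD ▸ hzD)
    exact ⟨r, mem_arm_of_mem_arcBetween hD hqD hrq hrc, forall_mem_insert.2
      ⟨hrz, fun w hw ↦ arcBetween_subset_arcBetween (hq w hw) hrq⟩⟩

end Directions

/-! ### The action on arms -/

section ArmImages

variable [UniquelyArcConnectedSpace X] [FiniteTree Y] {f : X → Y} {x : X}

theorem exists_common_image_of_arms (hf : Continuous f) {S : Set (Set X)} (hS : S ⊆ arms x)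
    (hfin : S.Finite) {y : Set X → X} (hy : ∀ C ∈ S, y C ∈ C)
    (hinj : ∀ C ∈ S, InjOn f (arcBetween x (y C))) {D : Set Y} (hD : D ∈ arms (f x))
    (hfy : ∀ C ∈ S, f (y C) ∈ D) :
    ∃ q, ∀ C ∈ S, ∃ p ∈ C, p ∈ arcBetween x (y C) ∧ f p = q := by
  obtain ⟨q, hqD, hq⟩ := exists_mem_forall_mem_arcBetween hD (hfin.image fun C ↦ f (y C))
    (image_subset_iff.2 hfy)
  refine ⟨q, fun C hC ↦ ?_⟩
  have hqC := hq _ (mem_image_of_mem _ hC)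
  rw [← image_arcBetween hf (hinj C hC)] at hqC
  obtain ⟨p, hp, rfl⟩ := hqC
  have hpx : p ≠ x := fun h ↦ ne_of_mem_arm hD hqD (congrArg f h)
  exact ⟨p, mem_arm_of_mem_arcBetween (hS hC) (hy C hC) hp hpx, hp, rfl⟩

theorem ncard_arms_le_ncard_arms_map (hf : Continuous f) {U : Set X} (hU : U ∈ 𝓝 x)
    (hinj : InjOn f U) : (arms x).ncard ≤ (arms (f x)).ncard := by
  have : Nonempty X := ⟨x⟩
  choose! y hyC hyU using fun C (hC : C ∈ arms x) ↦ exists_arcBetween_subset_of_mem_nhds hC hU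
  have hfy : ∀ C ∈ arms x, f (y C) ≠ f x := fun C hC ↦
    hinj.ne (hyU C hC (right_mem_arcBetween x _)) (mem_of_mem_nhds hU)
      (ne_of_mem_arm hC (hyC C hC))
  refine ncard_le_ncard_of_injOn (fun C ↦ armTo (f x) (f (y C)))
    (fun C hC ↦ armTo_mem_arms (hfy C hC)) (fun C hC D hD hCD ↦ ?_) (FiniteTree.finite_arms _)
  replace hCD : armTo (f x) (f (y C)) = armTo (f x) (f (y D)) := hCD
  have hsub : ({C, D} : Set (Set X)) ⊆ arms x := pair_subset hC hD
  have hmem : ∀ E ∈ ({C, D} : Set (Set X)), f (y E) ∈ armTo (f x) (f (y C)) := by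
    rintro E (rfl | rfl)
    · exact mem_armTo_self (hfy E hC)
    · rw [hCD]
      exact mem_armTo_self (hfy E hD)
  obtain ⟨q, hq⟩ := exists_common_image_of_arms hf hsub (toFinite _)
    (fun E hE ↦ hyC E (hsub hE)) (fun E hE ↦ hinj.mono (hyU E (hsub hE)))
    (armTo_mem_arms (hfy C hC)) hmem
  obtain ⟨p, hpC, hp, rfl⟩ := hq C (by simp)
  obtain ⟨p', hpD, hp', heq⟩ := hq D (by simp)
  obtain rfl := hinj (hyU D hD hp') (hyU C hC hp) heq
  exact arms_eq_of_mem hC hD hpC hpD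

theorem exists_encard_arms_le_encard_preimage (hf : Continuous f) (hfin : (arms x).Finite)
    (hinj : ∀ y, InjOn f (arcBetween x y)) (hfx : IsEndpoint (f x)) :
    ∃ q, (arms x).encard ≤ (f ⁻¹' {q}).encard := by
  have : Nonempty X := ⟨x⟩
  choose! y hy using fun C (hC : C ∈ arms x) ↦ nonempty_of_mem_arms hC
  obtain ⟨D, hD⟩ := ncard_eq_one.1 hfx
  have hfy : ∀ C ∈ arms x, f (y C) ∈ D := by
    intro C hC
    have hne : f (y C) ≠ f x := (hinj (y C)).ne (right_mem_arcBetween x _)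
      (left_mem_arcBetween x _) (ne_of_mem_arm hC (hy C hC))
    have harm : armTo (f x) (f (y C)) = D := mem_singleton_iff.1 (hD ▸ armTo_mem_arms hne)
    exact harm ▸ mem_armTo_self hne
  obtain ⟨q, hq⟩ := exists_common_image_of_arms hf Subset.rfl hfin hy (fun C _ ↦ hinj (y C))
    (hD ▸ mem_singleton D) hfy
  choose! p hpC _ hpq using hq
  refine ⟨q, encard_le_encard_of_injOn hpq fun C hC C' hC' hpp ↦ ?_⟩
  exact arms_eq_of_mem hC hC' (hpC C hC) (hpp ▸ hpC C' hC')

end ArmImages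

/-! ### Maps that are locally injective off a critical point -/

section CriticalPoint

variable {f : X → X} {c x y : X}

theorem injOn_arcBetween_of_notMem_interior [UniquelyArcConnectedSpace X] (hf : Continuous f)
    (hloc : ∀ x ≠ c, ∃ U ∈ 𝓝 x, InjOn f U) (hc : c ∉ arcBetween x y \ {x, y}) :
    InjOn f (arcBetween x y) :=
  injOn_arcBetween hf fun _ hz ↦ hloc _ (ne_of_mem_of_not_mem hz hc)

variable [FiniteTree X]

theorem isEndpoint_of_isEndpoint_map [Nontrivial X] (hf : Continuous f) {U : Set X}
    (hU : U ∈ 𝓝 x) (hinj : InjOn f U) (hfx : IsEndpoint (f x)) : IsEndpoint x :=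
  le_antisymm ((ncard_arms_le_ncard_arms_map hf hU hinj).trans_eq hfx)
    ((ncard_pos (FiniteTree.finite_arms x)).2 (arms_nonempty x))

theorem isEndpoint_of_isEndpoint_iterate [Nontrivial X] (hf : Continuous f)
    (hloc : ∀ x ≠ c, ∃ U ∈ 𝓝 x, InjOn f U) (k : ℕ) (hk : IsEndpoint (f^[k] (f c))) :
    IsEndpoint (f c) := by
  induction k with
  | zero => exact hk
  | succ k ih =>
    rw [iterate_succ_apply'] at hk
    by_cases hkc : f^[k] (f c) = c
    · rwa [hkc] at hk
    · obtain ⟨U, hU, hinj⟩ := hloc _ hkc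
      exact ih (isEndpoint_of_isEndpoint_map hf hU hinj hk)

theorem isEndpoint_critical_value (hf : Continuous f) (hloc : ∀ x ≠ c, ∃ U ∈ 𝓝 x, InjOn f U)
    (horbit : ∀ x, IsEndpoint x → ∃ k, f^[k] c = x) (hfc : f c ≠ c) : IsEndpoint (f c) := by
  have : Nontrivial X := ⟨f c, c, hfc⟩
  obtain ⟨e, he, hend⟩ := exists_isEndpoint_mem FiniteTree.finite_arms (armTo_mem_arms hfc)
  obtain ⟨_ | k, rfl⟩ := horbit e hend
  · exact absurd he self_notMem_armTo
  · exact isEndpoint_of_isEndpoint_iterate hf hloc k hend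

theorem ncard_arms_critical_point_le {d : ℕ} (hf : Continuous f)
    (hloc : ∀ x ≠ c, ∃ U ∈ 𝓝 x, InjOn f U) (hfib : ∀ y, (f ⁻¹' {y}).encard ≤ d)
    (hfc : IsEndpoint (f c)) : (arms c).ncard ≤ d := by
  have hfin := FiniteTree.finite_arms c
  obtain ⟨q, hq⟩ := exists_encard_arms_le_encard_preimage hf hfin
    (fun y ↦ injOn_arcBetween_of_notMem_interior hf hloc (y := y) fun h ↦ h.2 (Or.inl rfl)) hfc
  rw [← Nat.cast_le (α := ℕ∞), hfin.cast_ncard_eq]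
  exact hq.trans (hfib q)

theorem isBranchPt_iterate (hf : Continuous f) (hloc : ∀ x ≠ c, ∃ U ∈ 𝓝 x, InjOn f U)
    (hc : ¬ IsBranchPt c) (hx : IsBranchPt x) (k : ℕ) : IsBranchPt (f^[k] x) := by
  induction k with
  | zero => exact hx
  | succ k ih =>
    obtain ⟨U, hU, hinj⟩ := hloc (f^[k] x) fun h ↦ hc (h ▸ ih)
    rw [iterate_succ_apply']
    exact ih.trans (ncard_arms_le_ncard_arms_map hf hU hinj)

theorem monotone_ncard_arms_iterate (hf : Continuous f)
    (hloc : ∀ x ≠ c, ∃ U ∈ 𝓝 x, InjOn f U) (hx : ∀ k, f^[k] x ≠ c) :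
    Monotone fun k ↦ (arms (f^[k] x)).ncard := by
  refine monotone_nat_of_le_succ fun k ↦ ?_
  obtain ⟨U, hU, hinj⟩ := hloc _ (hx k)
  rw [iterate_succ_apply']
  exact ncard_arms_le_ncard_arms_map hf hU hinj

theorem critical_value_endpoint_and_branch_structure_general (hf : Continuous f)
    (hloc : ∀ x ≠ c, ∃ U ∈ 𝓝 x, InjOn f U) (hfib : ∀ y, (f ⁻¹' {y}).encard ≤ 2)
    (horbit : ∀ x, IsEndpoint x → ∃ k, f^[k] c = x) (hfc : f c ≠ c) :
    IsEndpoint (f c) ∧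
    (arms c).ncard ≤ 2 ∧
    (∀ x : X, IsBranchPt x → ∃ k n : ℕ, 1 ≤ n ∧ f^[k + n] x = f^[k] x) ∧
    (∀ x : X, IsBranchPt x → ∀ k : ℕ, f^[k] x ≠ c) ∧
    (∀ x : X, IsBranchPt x → ∀ k n : ℕ, 1 ≤ n → f^[n] (f^[k] x) = f^[k] x →
      ∀ j : ℕ, k ≤ j → (arms (f^[j] x)).ncard = (arms (f^[k] x)).ncard) ∧
    (∀ x y : X, c ∉ arcBetween x y \ {x, y} → MapsHomeoOn f (arcBetween x y)) := by
  have hvalue : IsEndpoint (f c) := isEndpoint_critical_value hf hloc horbit hfc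
  have harms : (arms c).ncard ≤ 2 := ncard_arms_critical_point_le hf hloc hfib hvalue
  have hc : ¬ IsBranchPt c := fun h ↦ (Nat.lt_of_lt_of_le h harms).false
  have hiter : ∀ x, IsBranchPt x → ∀ k, IsBranchPt (f^[k] x) := fun _ ↦
    isBranchPt_iterate hf hloc hc
  have havoid : ∀ x, IsBranchPt x → ∀ k, f^[k] x ≠ c := fun x hx k h ↦ hc (h ▸ hiter x hx k)
  refine ⟨hvalue, harms, fun x hx ↦ ?_, havoid, fun x hx k n hn hper j hkj ↦ ?_, fun x y hxy ↦ ?_⟩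
  · exact exists_iterate_add_eq_of_finite FiniteTree.finite_setOf_isBranchPt (hiter x hx)
  · exact eq_of_monotone_iterate_of_isPeriodicPt (φ := fun x ↦ (arms x).ncard)
      (monotone_ncard_arms_iterate hf hloc (havoid x hx)) hn hper hkj
  · exact mapsHomeoOn_arcBetween hf (injOn_arcBetween_of_notMem_interior hf hloc hxy)

end CriticalPoint

/-! ### Hubbard trees -/

theorem IsLocalHomeoAt.exists_mem_nhds_injOn {f : X → X} {x : X} (h : IsLocalHomeoAt f x) :
    ∃ U ∈ 𝓝 x, InjOn f U :=
  let ⟨U, hU, hxU, hemb⟩ := h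
  ⟨U, hU.mem_nhds hxU, injOn_iff_injective.2 hemb.injective⟩

namespace HubbardTree

theorem finiteTree (H : HubbardTree X) : FiniteTree X where
  toCompactSpace := H.compact
  toT2Space := H.t2
  existsUnique_isArcBetween x y := ⟨H.arc x y, H.arc_isArc x y, H.arc_unique x y⟩
  finite_arms := H.arms_finite
  finite_setOf_isBranchPt := H.branch_finite
  finite_setOf_isEndpoint := H.endpoint_finite

theorem arc_eq_arcBetween [UniquelyArcConnectedSpace X] (H : HubbardTree X) (x y : X) :
    H.arc x y = arcBetween x y :=
  (H.arc_isArc x y).eq_arcBetween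

theorem encard_preimage_singleton_le_two (H : HubbardTree X) (y : X) :
    (H.f ⁻¹' {y}).encard ≤ 2 :=
  let ⟨a, b, hab⟩ := H.two_preimages y
  (encard_le_encard hab).trans ((encard_insert_le {b} a).trans_eq (by rw [encard_singleton]; rfl))

end HubbardTree

/-- Lemma 2.3, "The Hubbard Tree".
In every Hubbard tree: the critical value is an endpoint; the critical point has at
most two arms; every branch point is periodic or preperiodic; no iterated image of a
branch point equals the critical point; the number of arms is constant along the
periodic part of the orbit of any branch point; and every arc not containing the
critical point in its interior is mapped homeomorphically onto its image. -/
theorem critical_value_endpoint_and_branch_structure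
    {X : Type*} [TopologicalSpace X] (H : HubbardTree X) :
    IsEndpoint H.c1 ∧
    (arms H.c0).ncard ≤ 2 ∧
    (∀ x : X, IsBranchPt x → ∃ k n : ℕ, 1 ≤ n ∧ H.f^[k + n] x = H.f^[k] x) ∧
    (∀ x : X, IsBranchPt x → ∀ k : ℕ, H.f^[k] x ≠ H.c0) ∧
    (∀ x : X, IsBranchPt x → ∀ k n : ℕ, 1 ≤ n → H.f^[n] (H.f^[k] x) = H.f^[k] x →
      ∀ j : ℕ, k ≤ j → (arms (H.f^[j] x)).ncard = (arms (H.f^[k] x)).ncard) ∧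
    (∀ x y : X, H.c0 ∉ H.arc x y \ {x, y} → MapsHomeoOn H.f (H.arc x y)) := by
  have := H.finiteTree
  simpa only [HubbardTree.c1, H.arc_eq_arcBetween] using
    critical_value_endpoint_and_branch_structure_general
      H.cont (fun x hx ↦ (H.local_homeo x hx).exists_mem_nhds_injOn)
      H.encard_preimage_singleton_le_two H.endpoints_on_orbit H.crit_not_fixed

end HubbardTrees
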